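/- Let p ∈ (1, 3/2] and d ≥ 1 an integer, and define h : ℝ → ℝ by h(x) = (d/2)x² if |x| ≤ d^{1/(p−2)}, and h(x) = ((p−2)/(p−1))·d^{(p−1)/(p−2)}·|x| + |x|^p/(p(p−1)) + ((2−p)/(2p))·d^{p/(p−2)} otherwise. Then for every x ∈ ℝ^d with Σ_{i=1}^d |x_i|^p ≤ 1, one has Σ_{i=1}^d h(x_i) ≤ 2·log(d) + 1. -/

import Mathlib

/-!
The bound holds coordinatewise: `hpot p d y ≤ (log d + 1/2) * |y| ^ p` whenever `|y| ≤ 1`, and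
summing over coordinates gives even `log d + 1/2`.

For the coordinate bound put `t = d ^ (1 / (p - 2))`, so `d = t ^ (p - 2)` and `t ≤ 1`. If
`|y| ≤ t`, then `(d / 2) * y ^ 2 = |y| ^ p * (|y| / t) ^ (2 - p) / 2 ≤ |y| ^ p / 2`. If `t < |y|`,
dividing `hpot p d y` by `|y| ^ p` gives, with `u = |y| / t ≥ 1`,
`1 / (p (p - 1)) - (2 - p) / (p - 1) * u ^ (1 - p) + (2 - p) / (2 p) * u ^ (-p)`; the estimates
`u ^ (1 - p) ≥ 1 - (p - 1) log u` and `u ^ (-p) ≤ 1` bound this by `1 / 2 + (2 - p) log u`, and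
`(2 - p) log u ≤ -(2 - p) log t = log d`.
-/

/-- The clipped coordinate potential for online linear optimisation over
`ℓ_p`-balls: the `p`-th power potential with second derivative clipped at `d`. -/
noncomputable def hpot (p : ℝ) (d : ℕ) (x : ℝ) : ℝ :=
  if |x| ≤ (d : ℝ) ^ (1 / (p - 2)) then ((d : ℝ) / 2) * x ^ 2
  else ((p - 2) / (p - 1)) * (d : ℝ) ^ ((p - 1) / (p - 2)) * |x|
    + |x| ^ p / (p * (p - 1)) + ((2 - p) / (2 * p)) * (d : ℝ) ^ (p / (p - 2))

/-- The coordinatewise bound behind the diameter estimate. -/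
lemma hpot_le (p : ℝ) (hp1 : 1 < p) (hp2 : p < 2) (d : ℕ) (hd : 1 ≤ d) (y : ℝ) (hy : |y| ≤ 1) :
    hpot p d y ≤ (Real.log d + 1 / 2) * |y| ^ p := by
  have hd1 : (1 : ℝ) ≤ d := by exact_mod_cast hd
  have hd0 : (0 : ℝ) < d := by linarith
  have hL : 0 ≤ Real.log d := Real.log_nonneg hd1
  have hp2' : p - 2 ≠ 0 := by linarith
  unfold hpot
  obtain ⟨t, ht⟩ : ∃ t : ℝ, t = (d : ℝ) ^ (1 / (p - 2)) := ⟨_, rfl⟩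
  have ht0 : 0 < t := ht ▸ Real.rpow_pos_of_pos hd0 _
  have htd : t ^ (p - 2) = d := by
    rw [ht, ← Real.rpow_mul hd0.le, one_div, inv_mul_cancel₀ hp2', Real.rpow_one]
  have hta : (d : ℝ) ^ ((p - 1) / (p - 2)) = t ^ (p - 1) := by
    rw [ht, ← Real.rpow_mul hd0.le]; congr 1; ring
  have htp : (d : ℝ) ^ (p / (p - 2)) = t ^ p := by
    rw [ht, ← Real.rpow_mul hd0.le]; congr 1; ring
  have hlog : (p - 2) * Real.log t = Real.log d := by
    rw [← htd, Real.log_rpow ht0]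
  rw [← ht, hta, htp]
  have hyp : 0 ≤ |y| ^ p := by positivity
  split_ifs with h
  · rcases (abs_nonneg y).eq_or_lt with h0 | h0
    · have : y = 0 := abs_eq_zero.mp h0.symm
      subst this
      simp only [ne_eq, OfNat.ofNat_ne_zero, not_false_eq_true, zero_pow, mul_zero]
      positivity
    · have h1 : (d : ℝ) ≤ |y| ^ (p - 2) := by
        rw [← htd]
        exact Real.rpow_le_rpow_of_nonpos h0 h (by linarith)
      have h2 : |y| ^ p = |y| ^ (p - 2) * y ^ 2 := by
        rw [← sq_abs y, ← Real.rpow_natCast |y| 2, ← Real.rpow_add h0]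
        congr 1; push_cast; ring
      have h3 : d * y ^ 2 ≤ |y| ^ p := by
        rw [h2]; exact mul_le_mul_of_nonneg_right h1 (sq_nonneg y)
      nlinarith [mul_nonneg hL hyp]
  · push Not at h
    have h0 : 0 < |y| := ht0.trans h
    have hA : |y| ^ p * (1 + (p - 1) * Real.log t) ≤ t ^ (p - 1) * |y| := by
      have e : t ^ (p - 1) * |y| = |y| ^ p * (t / |y|) ^ (p - 1) := by
        rw [Real.div_rpow ht0.le h0.le, Real.rpow_sub_one h0.ne' p]
        field_simp
      rw [e]
      refine mul_le_mul_of_nonneg_left ?_ hyp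
      rw [Real.rpow_def_of_pos (div_pos ht0 h0), Real.log_div ht0.ne' h0.ne']
      have h4 := Real.add_one_le_exp ((Real.log t - Real.log |y|) * (p - 1))
      have h5 : Real.log |y| ≤ 0 := Real.log_nonpos h0.le hy
      nlinarith
    have hB : t ^ p ≤ |y| ^ p := Real.rpow_le_rpow ht0.le h.le (by linarith)
    have hp0 : 0 < p - 1 := by linarith
    have c1 : 0 ≤ (2 - p) / (p - 1) := div_nonneg (by linarith) hp0.le
    have c2 : 0 ≤ (2 - p) / (2 * p) := div_nonneg (by linarith) (by linarith)
    have k1 := mul_le_mul_of_nonneg_left hA c1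
    have k2 := mul_le_mul_of_nonneg_left hB c2
    have e1 : (p - 2) / (p - 1) * t ^ (p - 1) * |y|
        = -((2 - p) / (p - 1) * (t ^ (p - 1) * |y|)) := by ring
    have e2 : (Real.log d + 1 / 2) * |y| ^ p
        = -((2 - p) / (p - 1) * (|y| ^ p * (1 + (p - 1) * Real.log t)))
          + |y| ^ p / (p * (p - 1)) + (2 - p) / (2 * p) * |y| ^ p := by
      rw [← hlog]
      have : p ≠ 0 := by linarith
      have := hp0.ne'
      generalize |y| ^ p = s
      field_simp
      ring
    rw [e1, e2]
    linarith

/-- Dimension-dependent diameter bound, uniform as `p → 1`: for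
`p ∈ (1, 3/2]`, `∑ i, hpot p d (x i) ≤ 2 log d + 1` whenever
`∑ i, |x i|^p ≤ 1`. -/
theorem stmt12 (p : ℝ) (hp1 : 1 < p) (hp2 : p ≤ 3 / 2) (d : ℕ) (hd : 1 ≤ d)
    (x : Fin d → ℝ) (hx : ∑ i, |x i| ^ p ≤ 1) :
    ∑ i, hpot p d (x i) ≤ 2 * Real.log d + 1 := by
  have hL : 0 ≤ Real.log d := Real.log_nonneg (by exact_mod_cast hd)
  have hx1 : ∀ i, |x i| ≤ 1 := by
    intro i
    have h : |x i| ^ p ≤ 1 :=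
      (Finset.single_le_sum (f := fun i => |x i| ^ p) (fun j _ => by positivity)
        (Finset.mem_univ i)).trans hx
    by_contra! hc
    exact absurd h (not_le.mpr (Real.one_lt_rpow hc (by linarith)))
  calc ∑ i, hpot p d (x i)
      ≤ ∑ i, (Real.log d + 1 / 2) * |x i| ^ p :=
        Finset.sum_le_sum fun i _ => hpot_le p hp1 (by linarith) d hd (x i) (hx1 i)
    _ = (Real.log d + 1 / 2) * ∑ i, |x i| ^ p := by rw [Finset.mul_sum]
    _ ≤ (Real.log d + 1 / 2) * 1 := by gcongr
    _ ≤ 2 * Real.log d + 1 := by linarith
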